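/- arXiv:1901.09453 — 2 statements merged into one kernel-verified Lean document; each statement's English description precedes it below -/
import Mathlib

section
/- Let X and Z be measurable spaces, D_S and D_T probability measures on X, f_S, f_T : X → {0,1} measurable labeling functions, g_S, g_T : X → Z measurable transformations, and h : Z → {0,1} measurable. Let D_S^Z := (g_S)_*D_S, D_T^Z := (g_T)_*D_T, D_S^Y := (f_S)_*D_S, and D_T^Y := (f_T)_*D_T. If d_JS(D_S^Y, D_T^Y) ≥ d_JS(D_S^Z, D_T^Z), then ε_S(h∘g_S) + ε_T(h∘g_T) ≥ (1/2)·( d_JS(D_S^Y, D_T^Y) − d_JS(D_S^Z, D_T^Z) )², where ε_S(h∘g_S) := E_{x∼D_S}[|h(g_S(x)) − f_S(x)|] and ε_T(h∘g_T) := E_{x∼D_T}[|h(g_T(x)) − f_T(x)|]. -/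
open MeasureTheory
open scoped ENNReal

/-- The Kullback–Leibler divergence `KL(μ‖ν) = ∫ log(dμ/dν) dμ` (real-valued;
this is the correct value whenever `μ ≪ ν`, as is the case below where the
second argument is the midpoint measure). -/
noncomputable def klReal {Ω : Type*} [MeasurableSpace Ω] (μ ν : Measure Ω) : ℝ :=
  ∫ x, llr μ ν x ∂μ

/-- The Jensen–Shannon divergence
`D_JS(μ‖ν) := (1/2)·KL(μ‖m) + (1/2)·KL(ν‖m)` with `m := (μ + ν)/2`. -/
noncomputable def jsDiv {Ω : Type*} [MeasurableSpace Ω] (μ ν : Measure Ω) : ℝ :=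
  (1 / 2) * klReal μ ((2 : ℝ≥0∞)⁻¹ • (μ + ν)) + (1 / 2) * klReal ν ((2 : ℝ≥0∞)⁻¹ • (μ + ν))

/-- The Jensen–Shannon distance `d_JS(μ,ν) := √(D_JS(μ‖ν))`. -/
noncomputable def jsDist {Ω : Type*} [MeasurableSpace Ω] (μ ν : Measure Ω) : ℝ :=
  Real.sqrt (jsDiv μ ν)

/-!
The Jensen–Shannon distance is a metric: the double integral of `1 / (s + t)` over `(x, y]²` equals
both `2 * jsKernel x y` and, by `1 / (s + t) = ∫ u in (0, ∞), exp (-u * s) * exp (-u * t)`, a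
squared `L²` distance, so `√jsKernel` satisfies the triangle inequality pointwise, and Minkowski's
inequality integrates it. Moreover the Jensen–Shannon divergence is at most the total variation
distance, so the true labels lie within `√error` of the predicted ones on each domain, while the
predictions are images under `h` of the representations and hence, by data processing, no farther
apart than these. Thus the gap between the two distances is at most `√errS + √errT`, whose square is
at most `2 * (errS + errT)`.
-/

section SqrtIntegral

variable {α : Type*} [MeasurableSpace α] {μ : Measure α} {f g h : α → ℝ}

theorem memLp_two_sqrt (hf : Integrable f μ) (hf₀ : ∀ x, 0 ≤ f x) :
    MemLp (fun x ↦ √(f x)) 2 μ := by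
  rw [memLp_two_iff_integrable_sq (Real.continuous_sqrt.comp_aestronglyMeasurable hf.1)]
  simpa only [Real.sq_sqrt (hf₀ _)] using hf

theorem lpNorm_two_sqrt (hf : AEStronglyMeasurable f μ) (hf₀ : ∀ x, 0 ≤ f x) :
    lpNorm (fun x ↦ √(f x)) 2 μ = √(∫ x, f x ∂μ) := by
  rw [lpNorm_eq_integral_norm_rpow_toReal two_ne_zero ENNReal.ofNat_ne_top
    (Real.continuous_sqrt.comp_aestronglyMeasurable hf), Real.sqrt_eq_rpow]
  simp [Real.sq_sqrt (hf₀ _)]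

theorem sqrt_integral_le_add_of_sqrt_le_add (hf : Integrable f μ) (hg : Integrable g μ)
    (hh : AEStronglyMeasurable h μ) (hf₀ : ∀ x, 0 ≤ f x) (hg₀ : ∀ x, 0 ≤ g x) (hh₀ : ∀ x, 0 ≤ h x)
    (hle : ∀ x, √(h x) ≤ √(f x) + √(g x)) :
    √(∫ x, h x ∂μ) ≤ √(∫ x, f x ∂μ) + √(∫ x, g x ∂μ) := by
  have hf₂ := memLp_two_sqrt hf hf₀
  have hg₂ := memLp_two_sqrt hg hg₀
  rw [← lpNorm_two_sqrt hh hh₀, ← lpNorm_two_sqrt hf.1 hf₀, ← lpNorm_two_sqrt hg.1 hg₀]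
  calc lpNorm (fun x ↦ √(h x)) 2 μ
      ≤ lpNorm ((fun x ↦ √(f x)) + fun x ↦ √(g x)) 2 μ :=
        lpNorm_mono_real (hf₂.add hg₂) fun x ↦ by
          simpa [abs_of_nonneg (Real.sqrt_nonneg _)] using hle x
    _ ≤ _ := lpNorm_add_le hf₂ one_le_two

end SqrtIntegral

/-- The integrand of the Jensen–Shannon divergence: if `μ` and `ν` have densities `p` and `q` with
respect to a common measure, then `2 * jsDiv μ ν` is the integral of `jsKernel p q`. -/
noncomputable def jsKernel (x y : ℝ) : ℝ :=
  x * Real.log (2 * x / (x + y)) + y * Real.log (2 * y / (y + x))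

section JsKernel

variable {x y z : ℝ}

theorem jsKernel_comm (x y : ℝ) : jsKernel x y = jsKernel y x :=
  add_comm _ _

theorem sub_div_two_le_mul_log (hx : 0 ≤ x) (hy : 0 ≤ y) :
    (x - y) / 2 ≤ x * Real.log (2 * x / (x + y)) := by
  rcases hx.eq_or_lt with rfl | hx
  · simp only [zero_sub, zero_mul]
    linarith
  calc (x - y) / 2 = x * (1 - (2 * x / (x + y))⁻¹) := by field_simp; ring
    _ ≤ x * Real.log (2 * x / (x + y)) := by
      gcongr
      exact Real.one_sub_inv_le_log_of_pos (by positivity)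

theorem mul_log_le_mul_sub_div_add (hx : 0 ≤ x) (hy : 0 ≤ y) :
    x * Real.log (2 * x / (x + y)) ≤ x * ((x - y) / (x + y)) := by
  rcases hx.eq_or_lt with rfl | hx
  · simp
  calc x * Real.log (2 * x / (x + y)) ≤ x * (2 * x / (x + y) - 1) := by
        gcongr
        exact Real.log_le_sub_one_of_pos (by positivity)
    _ = x * ((x - y) / (x + y)) := by field_simp; ring

theorem abs_mul_log_le_add (hx : 0 ≤ x) (hy : 0 ≤ y) :
    |x * Real.log (2 * x / (x + y))| ≤ x + y := by
  have hlower := sub_div_two_le_mul_log hx hy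
  have hupper : x * ((x - y) / (x + y)) ≤ x :=
    mul_le_of_le_one_right hx (div_le_one_of_le₀ (by linarith) (by positivity))
  exact abs_le.2 ⟨by linarith, by linarith [mul_log_le_mul_sub_div_add hx hy]⟩

theorem jsKernel_nonneg (hx : 0 ≤ x) (hy : 0 ≤ y) : 0 ≤ jsKernel x y := by
  unfold jsKernel
  linarith [sub_div_two_le_mul_log hx hy, sub_div_two_le_mul_log hy hx]

theorem jsKernel_le_abs_sub (hx : 0 ≤ x) (hy : 0 ≤ y) : jsKernel x y ≤ |x - y| := by
  have hratio : |x - y| / (x + y) ≤ 1 :=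
    div_le_one_of_le₀ (abs_le.2 ⟨by linarith, by linarith⟩) (by positivity)
  calc jsKernel x y ≤ x * ((x - y) / (x + y)) + y * ((y - x) / (y + x)) :=
        add_le_add (mul_log_le_mul_sub_div_add hx hy) (mul_log_le_mul_sub_div_add hy hx)
    _ = |x - y| * (|x - y| / (x + y)) := by
      rw [add_comm y x, ← mul_div_assoc |x - y|, abs_mul_abs_self]; ring
    _ ≤ |x - y| := mul_le_of_le_one_right (abs_nonneg _) hratio

theorem jsKernel_eq_mul_log_sub (hx : 0 ≤ x) (hy : 0 ≤ y) :
    jsKernel x y =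
      x * Real.log (2 * x) + y * Real.log (2 * y) - (x + y) * Real.log (x + y) := by
  have hterm {a b : ℝ} (ha : 0 ≤ a) (hb : 0 ≤ b) :
      a * Real.log (2 * a / (a + b)) = a * Real.log (2 * a) - a * Real.log (a + b) := by
    rcases ha.eq_or_lt with rfl | ha
    · simp
    · rw [Real.log_div (by positivity) (by positivity), mul_sub]
  rw [jsKernel, hterm hx hy, hterm hy hx, add_comm y x]
  ring

theorem ofReal_intervalIntegral_eq_setLIntegral {f : ℝ → ℝ} (hxy : x ≤ y)
    (hf : IntervalIntegrable f volume x y) (hf₀ : ∀ t ∈ Set.Ioc x y, 0 ≤ f t) :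
    ENNReal.ofReal (∫ t in x..y, f t) = ∫⁻ t in Set.Ioc x y, ENNReal.ofReal (f t) := by
  rw [intervalIntegral.integral_of_le hxy]
  exact ofReal_integral_eq_lintegral_ofReal
    ((intervalIntegrable_iff_integrableOn_Ioc_of_le hxy).1 hf)
    ((ae_restrict_mem measurableSet_Ioc).mono hf₀)

theorem lintegral_Ioi_exp_neg_mul {s : ℝ} (hs : 0 < s) :
    ∫⁻ u in Set.Ioi (0 : ℝ), ENNReal.ofReal (Real.exp (-u * s)) = ENNReal.ofReal s⁻¹ := by
  have hcomm (u : ℝ) : -u * s = -s * u := by ring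
  simp only [hcomm]
  rw [← ofReal_integral_eq_lintegral_ofReal (exp_neg_integrableOn_Ioi 0 hs)
    (.of_forall fun _ ↦ (Real.exp_pos _).le), integral_exp_mul_Ioi (neg_lt_zero.2 hs)]
  simp

theorem lintegral_Ioc_inv_add {s : ℝ} (hs : 0 < s) (hx : 0 ≤ x) (hxy : x ≤ y) :
    ∫⁻ t in Set.Ioc x y, ENNReal.ofReal (s + t)⁻¹ =
      ENNReal.ofReal (Real.log (s + y) - Real.log (s + x)) := by
  have hcont : ContinuousOn (fun t ↦ (s + t)⁻¹) (Set.uIcc x y) := by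
    rw [Set.uIcc_of_le hxy]
    exact ContinuousOn.inv₀ (by fun_prop) fun t ht ↦ by linarith [ht.1]
  rw [← ofReal_intervalIntegral_eq_setLIntegral hxy hcont.intervalIntegrable
      fun t ht ↦ inv_nonneg.2 (by linarith [ht.1]),
    intervalIntegral.integral_comp_add_left (fun t ↦ t⁻¹) s,
    integral_inv_of_pos (by linarith) (by linarith), Real.log_div (by linarith) (by linarith)]

theorem lintegral_Ioc_log_add_sub_log_add (hx : 0 ≤ x) (hxy : x ≤ y) :
    ∫⁻ s in Set.Ioc x y, ENNReal.ofReal (Real.log (s + y) - Real.log (s + x)) =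
      ENNReal.ofReal (2 * jsKernel x y) := by
  have hlog (c : ℝ) : IntervalIntegrable (fun s ↦ Real.log (s + c)) volume x y := by
    simpa using
      (intervalIntegral.intervalIntegrable_log' (a := x + c) (b := y + c)).comp_add_right c
  rw [← ofReal_intervalIntegral_eq_setLIntegral hxy ((hlog y).sub (hlog x))
      fun s hs ↦ sub_nonneg.2 (Real.log_le_log (by linarith [hs.1]) (by linarith)),
    intervalIntegral.integral_sub (hlog y) (hlog x),
    intervalIntegral.integral_comp_add_right Real.log,
    intervalIntegral.integral_comp_add_right Real.log, integral_log, integral_log,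
    jsKernel_eq_mul_log_sub hx (hx.trans hxy), add_comm y x, two_mul x, two_mul y]
  congr 1
  ring

/-- The function `u ↦ (exp (-u * x) - exp (-u * y)) / u`, which is `∫ s in x..y, exp (-u * s)` for
`u ≠ 0`. It is additive along `x → y → z`, and its squared `L²` norm on `(0, ∞)` is
`2 * jsKernel x y`. -/
noncomputable def expDiffQuot (x y u : ℝ) : ℝ :=
  (Real.exp (-u * x) - Real.exp (-u * y)) / u

theorem expDiffQuot_add (x y z u : ℝ) :
    expDiffQuot x y u + expDiffQuot y z u = expDiffQuot x z u := by
  rw [expDiffQuot, expDiffQuot, ← add_div, sub_add_sub_cancel, expDiffQuot]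

theorem expDiffQuot_sq_comm (x y u : ℝ) : expDiffQuot x y u ^ 2 = expDiffQuot y x u ^ 2 := by
  rw [expDiffQuot, expDiffQuot, div_pow, div_pow, sub_sq_comm]

theorem measurable_expDiffQuot (x y : ℝ) : Measurable (expDiffQuot x y) := by
  unfold expDiffQuot
  fun_prop

theorem expDiffQuot_eq_intervalIntegral {u : ℝ} (hu : u ≠ 0) :
    expDiffQuot x y u = ∫ s in x..y, Real.exp (-u * s) := by
  rw [intervalIntegral.integral_comp_mul_left Real.exp (neg_ne_zero.2 hu), integral_exp,
    expDiffQuot, smul_eq_mul]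
  field_simp
  ring

theorem ofReal_expDiffQuot_sq_eq_lintegral {u : ℝ} (hxy : x ≤ y) (hu : u ≠ 0) :
    ENNReal.ofReal (expDiffQuot x y u ^ 2) = ∫⁻ s in Set.Ioc x y, ∫⁻ t in Set.Ioc x y,
      ENNReal.ofReal (Real.exp (-u * (s + t))) := by
  have hcont : Continuous fun s ↦ Real.exp (-u * s) := by fun_prop
  have hquot : ENNReal.ofReal (expDiffQuot x y u) =
      ∫⁻ s in Set.Ioc x y, ENNReal.ofReal (Real.exp (-u * s)) := by
    rw [expDiffQuot_eq_intervalIntegral hu]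
    exact ofReal_intervalIntegral_eq_setLIntegral hxy (hcont.intervalIntegrable x y)
      fun _ _ ↦ (Real.exp_pos _).le
  have hnonneg : 0 ≤ expDiffQuot x y u := by
    rw [expDiffQuot_eq_intervalIntegral hu]
    exact intervalIntegral.integral_nonneg hxy fun _ _ ↦ (Real.exp_pos _).le
  rw [ENNReal.ofReal_pow hnonneg, hquot, sq, ← lintegral_mul_const _ (by fun_prop)]
  simp only [← lintegral_const_mul _ hcont.measurable.ennreal_ofReal,
    ← ENNReal.ofReal_mul (Real.exp_pos _).le, ← Real.exp_add, mul_add]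

theorem lintegral_lintegral_lintegral_swap_exp (x y : ℝ) :
    ∫⁻ u in Set.Ioi (0 : ℝ), ∫⁻ s in Set.Ioc x y, ∫⁻ t in Set.Ioc x y,
        ENNReal.ofReal (Real.exp (-u * (s + t))) =
      ∫⁻ s in Set.Ioc x y, ∫⁻ t in Set.Ioc x y, ∫⁻ u in Set.Ioi (0 : ℝ),
        ENNReal.ofReal (Real.exp (-u * (s + t))) := by
  have hinner : Measurable fun q : ℝ × ℝ ↦
      ∫⁻ t in Set.Ioc x y, ENNReal.ofReal (Real.exp (-q.1 * (q.2 + t))) :=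
    Measurable.lintegral_prod_right'
      (f := fun q : (ℝ × ℝ) × ℝ ↦ ENNReal.ofReal (Real.exp (-q.1.1 * (q.1.2 + q.2))))
      (by fun_prop)
  rw [lintegral_lintegral_swap hinner.aemeasurable]
  refine lintegral_congr fun s ↦ lintegral_lintegral_swap ?_
  exact Measurable.aemeasurable (by fun_prop)

theorem lintegral_expDiffQuot_sq (hx : 0 ≤ x) (hy : 0 ≤ y) :
    ∫⁻ u in Set.Ioi (0 : ℝ), ENNReal.ofReal (expDiffQuot x y u ^ 2) =
      ENNReal.ofReal (2 * jsKernel x y) := by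
  wlog hxy : x ≤ y generalizing x y
  · simpa only [jsKernel_comm x y, expDiffQuot_sq_comm x y] using this hy hx (le_of_not_ge hxy)
  calc ∫⁻ u in Set.Ioi (0 : ℝ), ENNReal.ofReal (expDiffQuot x y u ^ 2)
      = ∫⁻ u in Set.Ioi (0 : ℝ), ∫⁻ s in Set.Ioc x y, ∫⁻ t in Set.Ioc x y,
          ENNReal.ofReal (Real.exp (-u * (s + t))) :=
        setLIntegral_congr_fun measurableSet_Ioi fun u hu ↦
          ofReal_expDiffQuot_sq_eq_lintegral hxy (ne_of_gt hu)
    _ = ∫⁻ s in Set.Ioc x y, ∫⁻ t in Set.Ioc x y, ∫⁻ u in Set.Ioi (0 : ℝ),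
          ENNReal.ofReal (Real.exp (-u * (s + t))) :=
        lintegral_lintegral_lintegral_swap_exp x y
    _ = ∫⁻ s in Set.Ioc x y, ∫⁻ t in Set.Ioc x y, ENNReal.ofReal (s + t)⁻¹ :=
        setLIntegral_congr_fun measurableSet_Ioc fun s hs ↦
          setLIntegral_congr_fun measurableSet_Ioc fun t ht ↦
            lintegral_Ioi_exp_neg_mul (by linarith [hs.1, ht.1])
    _ = ∫⁻ s in Set.Ioc x y, ENNReal.ofReal (Real.log (s + y) - Real.log (s + x)) :=
        setLIntegral_congr_fun measurableSet_Ioc fun s hs ↦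
          lintegral_Ioc_inv_add (hx.trans_lt hs.1) hx hxy
    _ = ENNReal.ofReal (2 * jsKernel x y) := lintegral_Ioc_log_add_sub_log_add hx hxy

theorem integrableOn_expDiffQuot_sq (hx : 0 ≤ x) (hy : 0 ≤ y) :
    IntegrableOn (fun u ↦ expDiffQuot x y u ^ 2) (Set.Ioi 0) := by
  rw [IntegrableOn, ← lintegral_ofReal_ne_top_iff_integrable
    ((measurable_expDiffQuot x y).pow_const 2).aestronglyMeasurable
    (.of_forall fun _ ↦ sq_nonneg _), lintegral_expDiffQuot_sq hx hy]
  exact ENNReal.ofReal_ne_top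

theorem integral_expDiffQuot_sq (hx : 0 ≤ x) (hy : 0 ≤ y) :
    ∫ u in Set.Ioi (0 : ℝ), expDiffQuot x y u ^ 2 = 2 * jsKernel x y := by
  rw [integral_eq_lintegral_of_nonneg_ae (.of_forall fun _ ↦ sq_nonneg _)
      (integrableOn_expDiffQuot_sq hx hy).1, lintegral_expDiffQuot_sq hx hy,
    ENNReal.toReal_ofReal (mul_nonneg zero_le_two (jsKernel_nonneg hx hy))]

theorem sqrt_jsKernel_triangle (hx : 0 ≤ x) (hy : 0 ≤ y) (hz : 0 ≤ z) :
    √(jsKernel x z) ≤ √(jsKernel x y) + √(jsKernel y z) := by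
  have hminkowski := sqrt_integral_le_add_of_sqrt_le_add (integrableOn_expDiffQuot_sq hx hy)
    (integrableOn_expDiffQuot_sq hy hz) (integrableOn_expDiffQuot_sq hx hz).1
    (fun _ ↦ sq_nonneg _) (fun _ ↦ sq_nonneg _) (fun _ ↦ sq_nonneg _) fun u ↦ by
      simpa only [Real.sqrt_sq_eq_abs, expDiffQuot_add] using
        abs_add_le (expDiffQuot x y u) (expDiffQuot y z u)
  rw [integral_expDiffQuot_sq hx hy, integral_expDiffQuot_sq hy hz, integral_expDiffQuot_sq hx hz,
    Real.sqrt_mul zero_le_two, Real.sqrt_mul zero_le_two, Real.sqrt_mul zero_le_two,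
    ← mul_add] at hminkowski
  exact le_of_mul_le_mul_left hminkowski (by positivity)

end JsKernel

section JensenShannon

variable {Ω : Type*} [MeasurableSpace Ω]

/-- The midpoint `m = (μ + ν) / 2` of two measures, the reference measure of the Jensen–Shannon
divergence. -/
noncomputable abbrev midMeasure (μ ν : Measure Ω) : Measure Ω :=
  (2 : ℝ≥0∞)⁻¹ • (μ + ν)

theorem jsDiv_eq_klReal_midMeasure (μ ν : Measure Ω) :
    jsDiv μ ν = (1 / 2) * (klReal μ (midMeasure μ ν) + klReal ν (midMeasure ν μ)) := by
  rw [jsDiv, midMeasure, midMeasure, add_comm ν μ, mul_add]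

theorem absolutelyContinuous_midMeasure (μ ν : Measure Ω) : μ ≪ midMeasure μ ν :=
  (Measure.AbsolutelyContinuous.rfl.add_right ν).trans
    (Measure.absolutelyContinuous_smul (by simp))

theorem map_midMeasure {Ω' : Type*} [MeasurableSpace Ω'] (μ ν : Measure Ω) {f : Ω → Ω'}
    (hf : Measurable f) :
    (midMeasure μ ν).map f = midMeasure (μ.map f) (ν.map f) := by
  rw [midMeasure, Measure.map_smul, Measure.map_add _ _ hf]

variable (μ ν ρ ref : Measure Ω) [IsFiniteMeasure μ] [IsFiniteMeasure ν] [IsFiniteMeasure ρ]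
  [SigmaFinite ref]

instance isFiniteMeasure_midMeasure : IsFiniteMeasure (midMeasure μ ν) :=
  Measure.smul_finite _ (by simp)

theorem measureReal_univ_midMeasure :
    (midMeasure μ ν).real Set.univ = (μ.real Set.univ + ν.real Set.univ) / 2 := by
  rw [measureReal_ennreal_smul_apply, measureReal_add_apply, ENNReal.toReal_inv,
    ENNReal.toReal_ofNat, inv_mul_eq_div]

theorem toReal_rnDeriv_midMeasure :
    (fun x ↦ ((midMeasure μ ν).rnDeriv ref x).toReal) =ᵐ[ref]
      fun x ↦ ((μ.rnDeriv ref x).toReal + (ν.rnDeriv ref x).toReal) / 2 := by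
  filter_upwards [Measure.rnDeriv_smul_left_of_ne_top (μ + ν) ref (r := 2⁻¹) (by simp),
    Measure.rnDeriv_add μ ν ref, μ.rnDeriv_lt_top ref, ν.rnDeriv_lt_top ref]
    with x hsmul hadd hμ hν
  rw [hsmul, Pi.smul_apply, hadd, Pi.add_apply, smul_eq_mul, ENNReal.toReal_mul,
    ENNReal.toReal_add hμ.ne hν.ne, ENNReal.toReal_inv, ENNReal.toReal_ofNat, inv_mul_eq_div]

theorem toReal_rnDeriv_mul_llr_midMeasure :
    (fun x ↦ (μ.rnDeriv ref x).toReal * llr μ (midMeasure μ ν) x) =ᵐ[ref] fun x ↦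
      (μ.rnDeriv ref x).toReal * Real.log (2 * (μ.rnDeriv ref x).toReal /
        ((μ.rnDeriv ref x).toReal + (ν.rnDeriv ref x).toReal)) := by
  filter_upwards [toReal_rnDeriv_midMeasure μ ν ref,
    Measure.rnDeriv_mul_rnDeriv (κ := ref) (absolutelyContinuous_midMeasure μ ν)]
    with x hmid hchain
  set p := (μ.rnDeriv ref x).toReal with hp
  set q := (ν.rnDeriv ref x).toReal
  have hp₀ : 0 ≤ p := ENNReal.toReal_nonneg
  have hmul : (μ.rnDeriv (midMeasure μ ν) x).toReal * ((p + q) / 2) = p := by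
    rw [← hmid, ← ENNReal.toReal_mul, hp, ← hchain, Pi.mul_apply]
  rcases hp₀.eq_or_lt with hzero | hpos
  · rw [← hzero, zero_mul, zero_mul]
  · have hsum : 0 < p + q := add_pos_of_pos_of_nonneg hpos ENNReal.toReal_nonneg
    rw [llr, eq_div_of_mul_eq (half_pos hsum).ne' hmul, div_div_eq_mul_div, mul_comm p 2]

theorem integrable_toReal_rnDeriv_mul_llr_midMeasure :
    Integrable (fun x ↦ (μ.rnDeriv ref x).toReal * llr μ (midMeasure μ ν) x) ref := by
  refine (Measure.integrable_toReal_rnDeriv (μ := μ).add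
    (Measure.integrable_toReal_rnDeriv (μ := ν))).mono' (by fun_prop) ?_
  filter_upwards [toReal_rnDeriv_mul_llr_midMeasure μ ν ref] with x hx
  rw [hx]
  exact abs_mul_log_le_add ENNReal.toReal_nonneg ENNReal.toReal_nonneg

theorem integrable_llr_midMeasure : Integrable (llr μ (midMeasure μ ν)) μ :=
  (integrable_rnDeriv_smul_iff (absolutelyContinuous_midMeasure μ ν)).1
    (integrable_toReal_rnDeriv_mul_llr_midMeasure μ ν (midMeasure μ ν))

theorem klDiv_midMeasure_ne_top : InformationTheory.klDiv μ (midMeasure μ ν) ≠ ∞ :=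
  InformationTheory.klDiv_ne_top (absolutelyContinuous_midMeasure μ ν)
    (integrable_llr_midMeasure μ ν)

/- For measures of unequal mass each `klDiv` carries a mass correction; the two cancel here. -/
theorem jsDiv_eq_toReal_klDiv :
    jsDiv μ ν = (1 / 2) * ((InformationTheory.klDiv μ (midMeasure μ ν)).toReal +
      (InformationTheory.klDiv ν (midMeasure ν μ)).toReal) := by
  rw [InformationTheory.toReal_klDiv (absolutelyContinuous_midMeasure μ ν)
      (integrable_llr_midMeasure μ ν),
    InformationTheory.toReal_klDiv (absolutelyContinuous_midMeasure ν μ)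
      (integrable_llr_midMeasure ν μ),
    measureReal_univ_midMeasure, measureReal_univ_midMeasure, jsDiv_eq_klReal_midMeasure,
    klReal, klReal]
  ring

theorem toReal_klDiv_midMeasure_map_le {Ω' : Type*} [MeasurableSpace Ω'] {f : Ω → Ω'}
    (hf : Measurable f) :
    (InformationTheory.klDiv (μ.map f) (midMeasure (μ.map f) (ν.map f))).toReal ≤
      (InformationTheory.klDiv μ (midMeasure μ ν)).toReal := by
  rw [← map_midMeasure μ ν hf]
  exact ENNReal.toReal_mono (klDiv_midMeasure_ne_top μ ν) (InformationTheory.klDiv_map_le _ _ hf)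

theorem jsDist_map_le {Ω' : Type*} [MeasurableSpace Ω'] {f : Ω → Ω'} (hf : Measurable f) :
    jsDist (μ.map f) (ν.map f) ≤ jsDist μ ν := by
  refine Real.sqrt_le_sqrt ?_
  rw [jsDiv_eq_toReal_klDiv, jsDiv_eq_toReal_klDiv]
  gcongr 1 / 2 * (?_ + ?_)
  · exact toReal_klDiv_midMeasure_map_le μ ν hf
  · exact toReal_klDiv_midMeasure_map_le ν μ hf

theorem jsKernel_toReal_rnDeriv_ae_eq :
    (fun x ↦ jsKernel (μ.rnDeriv ref x).toReal (ν.rnDeriv ref x).toReal) =ᵐ[ref] fun x ↦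
      (μ.rnDeriv ref x).toReal * llr μ (midMeasure μ ν) x +
        (ν.rnDeriv ref x).toReal * llr ν (midMeasure ν μ) x :=
  ((toReal_rnDeriv_mul_llr_midMeasure μ ν ref).add
    (toReal_rnDeriv_mul_llr_midMeasure ν μ ref)).symm

theorem integrable_jsKernel_toReal_rnDeriv :
    Integrable (fun x ↦ jsKernel (μ.rnDeriv ref x).toReal (ν.rnDeriv ref x).toReal) ref :=
  ((integrable_toReal_rnDeriv_mul_llr_midMeasure μ ν ref).add
    (integrable_toReal_rnDeriv_mul_llr_midMeasure ν μ ref)).congr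
    (jsKernel_toReal_rnDeriv_ae_eq μ ν ref).symm

variable {μ ν ρ ref}

theorem jsDiv_eq_integral_jsKernel (hμ : μ ≪ ref) (hν : ν ≪ ref) :
    jsDiv μ ν =
      (1 / 2) * ∫ x, jsKernel (μ.rnDeriv ref x).toReal (ν.rnDeriv ref x).toReal ∂ref := by
  rw [integral_congr_ae (jsKernel_toReal_rnDeriv_ae_eq μ ν ref),
    integral_add (integrable_toReal_rnDeriv_mul_llr_midMeasure μ ν ref)
      (integrable_toReal_rnDeriv_mul_llr_midMeasure ν μ ref)]
  simp only [← smul_eq_mul (_ : ENNReal).toReal, integral_rnDeriv_smul hμ, integral_rnDeriv_smul hν]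
  exact jsDiv_eq_klReal_midMeasure μ ν

theorem jsDist_eq_sqrt_integral_jsKernel (hμ : μ ≪ ref) (hν : ν ≪ ref) :
    jsDist μ ν =
      √(1 / 2) * √(∫ x, jsKernel (μ.rnDeriv ref x).toReal (ν.rnDeriv ref x).toReal ∂ref) := by
  rw [jsDist, jsDiv_eq_integral_jsKernel hμ hν, Real.sqrt_mul (by norm_num)]

variable (μ ν ρ) in
theorem jsDist_triangle : jsDist μ ρ ≤ jsDist μ ν + jsDist ν ρ := by
  let ref := μ + ν + ρ
  have hμ : μ ≪ ref := (Measure.AbsolutelyContinuous.rfl.add_right ν).add_right ρ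
  have hν : ν ≪ ref := (Measure.le_add_left le_rfl).absolutelyContinuous.add_right ρ
  have hρ : ρ ≪ ref := (Measure.le_add_left le_rfl).absolutelyContinuous
  rw [jsDist_eq_sqrt_integral_jsKernel hμ hρ, jsDist_eq_sqrt_integral_jsKernel hμ hν,
    jsDist_eq_sqrt_integral_jsKernel hν hρ, ← mul_add]
  gcongr
  exact sqrt_integral_le_add_of_sqrt_le_add (integrable_jsKernel_toReal_rnDeriv μ ν ref)
    (integrable_jsKernel_toReal_rnDeriv ν ρ ref) (integrable_jsKernel_toReal_rnDeriv μ ρ ref).1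
    (fun _ ↦ jsKernel_nonneg ENNReal.toReal_nonneg ENNReal.toReal_nonneg)
    (fun _ ↦ jsKernel_nonneg ENNReal.toReal_nonneg ENNReal.toReal_nonneg)
    (fun _ ↦ jsKernel_nonneg ENNReal.toReal_nonneg ENNReal.toReal_nonneg)
    fun _ ↦
      sqrt_jsKernel_triangle ENNReal.toReal_nonneg ENNReal.toReal_nonneg ENNReal.toReal_nonneg

theorem integral_abs_toReal_rnDeriv_sub_le {ε : ℝ} (hμ : μ ≪ ref) (hν : ν ≪ ref)
    (hε : ∀ s, MeasurableSet s → |μ.real s - ν.real s| ≤ ε) :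
    ∫ x, |(μ.rnDeriv ref x).toReal - (ν.rnDeriv ref x).toReal| ∂ref ≤ 2 * ε := by
  have hμ_int : Integrable (fun x ↦ (μ.rnDeriv ref x).toReal) ref :=
    Measure.integrable_toReal_rnDeriv
  have hν_int : Integrable (fun x ↦ (ν.rnDeriv ref x).toReal) ref :=
    Measure.integrable_toReal_rnDeriv
  have hdiff_int :
      Integrable (fun x ↦ |(μ.rnDeriv ref x).toReal - (ν.rnDeriv ref x).toReal|) ref :=
    (hμ_int.sub hν_int).abs
  let s := {x | (ν.rnDeriv ref x).toReal ≤ (μ.rnDeriv ref x).toReal}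
  have hs : MeasurableSet s := measurableSet_le (by fun_prop) (by fun_prop)
  calc ∫ x, |(μ.rnDeriv ref x).toReal - (ν.rnDeriv ref x).toReal| ∂ref
      = (∫ x in s, ((μ.rnDeriv ref x).toReal - (ν.rnDeriv ref x).toReal) ∂ref) +
          ∫ x in sᶜ, ((ν.rnDeriv ref x).toReal - (μ.rnDeriv ref x).toReal) ∂ref := by
        rw [← integral_add_compl hs hdiff_int]
        congr 1
        · exact setIntegral_congr_fun hs fun x hx ↦ abs_of_nonneg (sub_nonneg.2 hx)
        · refine setIntegral_congr_fun hs.compl fun x hx ↦ ?_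
          exact (abs_sub_comm _ _).trans (abs_of_pos (sub_pos.2 (not_le.1 hx)))
    _ = (μ.real s - ν.real s) + (ν.real sᶜ - μ.real sᶜ) := by
        rw [integral_sub hμ_int.integrableOn hν_int.integrableOn,
          integral_sub hν_int.integrableOn hμ_int.integrableOn]
        simp only [Measure.setIntegral_toReal_rnDeriv hμ, Measure.setIntegral_toReal_rnDeriv hν]
    _ ≤ ε + ε := add_le_add (le_of_abs_le (hε s hs))
        (le_of_abs_le (abs_sub_comm (μ.real sᶜ) _ ▸ hε sᶜ hs.compl))
    _ = 2 * ε := (two_mul ε).symm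

theorem jsDiv_le_of_forall_abs_measureReal_sub_le {ε : ℝ}
    (hε : ∀ s, MeasurableSet s → |μ.real s - ν.real s| ≤ ε) : jsDiv μ ν ≤ ε := by
  let ref := μ + ν
  have hμ : μ ≪ ref := Measure.AbsolutelyContinuous.rfl.add_right ν
  have hν : ν ≪ ref := (Measure.le_add_left le_rfl).absolutelyContinuous
  calc jsDiv μ ν
      = (1 / 2) * ∫ x, jsKernel (μ.rnDeriv ref x).toReal (ν.rnDeriv ref x).toReal ∂ref :=
        jsDiv_eq_integral_jsKernel hμ hν
    _ ≤ (1 / 2) * ∫ x, |(μ.rnDeriv ref x).toReal - (ν.rnDeriv ref x).toReal| ∂ref := by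
        gcongr
        · exact integrable_jsKernel_toReal_rnDeriv μ ν ref
        · exact (Measure.integrable_toReal_rnDeriv.sub Measure.integrable_toReal_rnDeriv).abs
        · exact fun x ↦ jsKernel_le_abs_sub ENNReal.toReal_nonneg ENNReal.toReal_nonneg
    _ ≤ (1 / 2) * (2 * ε) := by
        gcongr
        exact integral_abs_toReal_rnDeriv_sub_le hμ hν hε
    _ = ε := by ring

end JensenShannon

section Labeling

variable {X Y : Type*} [MeasurableSpace X] [MeasurableSpace Y] {D : Measure X} {f g : X → Y}

theorem map_measureReal_sub_le [IsFiniteMeasure D] (hf : Measurable f) (hg : Measurable g)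
    {s : Set Y} (hs : MeasurableSet s) :
    (D.map f).real s - (D.map g).real s ≤ D.real {x | f x ≠ g x} := by
  rw [map_measureReal_apply hf hs, map_measureReal_apply hg hs]
  refine (le_measureReal_sdiff (by finiteness)).trans (measureReal_mono ?_)
  rintro x ⟨hfx, hgx⟩ hfg
  exact hgx (by rwa [Set.mem_preimage, ← hfg])

theorem jsDist_map_map_le_sqrt_measureReal_ne [IsFiniteMeasure D] (hf : Measurable f)
    (hg : Measurable g) :
    jsDist (D.map f) (D.map g) ≤ √(D.real {x | f x ≠ g x}) := by
  refine Real.sqrt_le_sqrt (jsDiv_le_of_forall_abs_measureReal_sub_le fun s hs ↦ ?_)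
  refine abs_sub_le_iff.2 ⟨map_measureReal_sub_le hf hg hs, ?_⟩
  simpa only [ne_comm] using map_measureReal_sub_le (D := D) hg hf hs

theorem integral_abs_sub_eq_measureReal_ne {f g : X → ℝ} (hf : Measurable f) (hg : Measurable g)
    (hf₀₁ : ∀ x, f x = 0 ∨ f x = 1) (hg₀₁ : ∀ x, g x = 0 ∨ g x = 1) :
    ∫ x, |f x - g x| ∂D = D.real {x | f x ≠ g x} := by
  have hne : MeasurableSet {x | f x ≠ g x} := (measurableSet_eq_fun hf hg).compl
  rw [← integral_indicator_one hne]
  congr 1 with x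
  rcases hf₀₁ x with hfx | hfx <;> rcases hg₀₁ x with hgx | hgx <;>
    simp [Set.indicator, hfx, hgx]

end Labeling

theorem stmt_11_general {XS XT Y Z : Type*} [MeasurableSpace XS] [MeasurableSpace XT]
    [MeasurableSpace Y] [MeasurableSpace Z] (DS : Measure XS) (DT : Measure XT)
    [IsFiniteMeasure DS] [IsFiniteMeasure DT] {fS : XS → Y} {fT : XT → Y}
    (hfS : Measurable fS) (hfT : Measurable fT) {gS : XS → Z} {gT : XT → Z}
    (hgS : Measurable gS) (hgT : Measurable gT) {h : Z → Y} (hh : Measurable h)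
    (hge : jsDist (DS.map gS) (DT.map gT) ≤ jsDist (DS.map fS) (DT.map fT)) :
    (1 / 2) * (jsDist (DS.map fS) (DT.map fT) - jsDist (DS.map gS) (DT.map gT)) ^ 2 ≤
      DS.real {x | h (gS x) ≠ fS x} + DT.real {x | h (gT x) ≠ fT x} := by
  set errS := DS.real {x | h (gS x) ≠ fS x}
  set errT := DT.real {x | h (gT x) ≠ fT x}
  let predS := DS.map (h ∘ gS)
  let predT := DT.map (h ∘ gT)
  have hS : jsDist (DS.map fS) predS ≤ √errS := by
    simpa only [errS, predS, ne_comm, Function.comp_apply] using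
      jsDist_map_map_le_sqrt_measureReal_ne (D := DS) hfS (hh.comp hgS)
  have hT : jsDist predT (DT.map fT) ≤ √errT :=
    jsDist_map_map_le_sqrt_measureReal_ne (hh.comp hgT) hfT
  have hpred : jsDist predS predT ≤ jsDist (DS.map gS) (DT.map gT) := by
    simpa only [predS, predT, Measure.map_map hh hgS, Measure.map_map hh hgT] using
      jsDist_map_le (DS.map gS) (DT.map gT) hh
  have hdist : jsDist (DS.map fS) (DT.map fT) - jsDist (DS.map gS) (DT.map gT) ≤
      √errS + √errT := by
    linarith [jsDist_triangle (DS.map fS) predS (DT.map fT),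
      jsDist_triangle predS predT (DT.map fT)]
  calc (1 / 2) * (jsDist (DS.map fS) (DT.map fT) - jsDist (DS.map gS) (DT.map gT)) ^ 2
      ≤ (1 / 2) * (√errS + √errT) ^ 2 := by
        gcongr 1 / 2 * ?_
        exact pow_le_pow_left₀ (sub_nonneg.2 hge) hdist 2
    _ ≤ (1 / 2) * (2 * (√errS ^ 2 + √errT ^ 2)) := by gcongr; exact add_sq_le
    _ = errS + errT := by
      rw [Real.sq_sqrt measureReal_nonneg, Real.sq_sqrt measureReal_nonneg]; ring

theorem stmt_11 {X Z : Type*} [MeasurableSpace X] [MeasurableSpace Z]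
    (DS DT : Measure X) [IsProbabilityMeasure DS] [IsProbabilityMeasure DT]
    (fS fT : X → ℝ) (hfS : Measurable fS) (hfT : Measurable fT)
    (hfSr : ∀ x, fS x = 0 ∨ fS x = 1) (hfTr : ∀ x, fT x = 0 ∨ fT x = 1)
    (gS gT : X → Z) (hgS : Measurable gS) (hgT : Measurable gT)
    (h : Z → ℝ) (hh : Measurable h) (hhr : ∀ z, h z = 0 ∨ h z = 1)
    (hge : jsDist (Measure.map gS DS) (Measure.map gT DT) ≤
      jsDist (Measure.map fS DS) (Measure.map fT DT)) :
    (1 / 2) * (jsDist (Measure.map fS DS) (Measure.map fT DT) -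
        jsDist (Measure.map gS DS) (Measure.map gT DT)) ^ 2 ≤
      (∫ x, |h (gS x) - fS x| ∂DS) + ∫ x, |h (gT x) - fT x| ∂DT := by
  have herrS : ∫ x, |h (gS x) - fS x| ∂DS = DS.real {x | h (gS x) ≠ fS x} :=
    integral_abs_sub_eq_measureReal_ne (hh.comp hgS) hfS (fun _ ↦ hhr _) hfSr
  have herrT : ∫ x, |h (gT x) - fT x| ∂DT = DT.real {x | h (gT x) ≠ fT x} :=
    integral_abs_sub_eq_measureReal_ne (hh.comp hgT) hfT (fun _ ↦ hhr _) hfTr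
  rw [herrS, herrT]
  exact stmt_11_general DS DT hfS hfT hgS hgT hh hge
end

section
/- Let X be a measurable space, D a probability measure on X, and H̃ a countable nonempty set of measurable functions from X to {0,1}. Fix n ≥ 1 and δ ∈ (0,1). Then with probability at least 1 − δ over an i.i.d. sample S = (x_1, …, x_n) ∼ D^n: d_{H̃}(D, D̂) ≤ 2·Rad_S(H̃) + 3·√(log(2/δ)/(2n)), where D̂ is the empirical distribution of S (the uniform measure on the sample points). -/
open MeasureTheory Set
open scoped ENNReal

/-- The empirical Rademacher complexity of the class `H` w.r.t. the sample `x`: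
the expectation, over i.i.d. uniform signs `σ ∈ {−1,+1}^n`, of
`sup_{h ∈ H} (1/n) ∑ i σ_i h(x_i)`.  The expectation is written as the average
over all `2^n` sign vectors (encoded as `Fin n → Bool`). -/
noncomputable def radS {X : Type*} {n : ℕ} (x : Fin n → X) (H : Set (X → ℝ)) : ℝ :=
  (∑ σ : Fin n → Bool,
    sSup ((fun h => (1 / (n : ℝ)) * ∑ i, (if σ i then (1 : ℝ) else -1) * h (x i)) '' H))
    / 2 ^ n

/-- The H-divergence induced by a class `H` of `{0,1}`-valued functions:
`d_H(P,Q) := sup_{h ∈ H} |P({x : h(x) = 1}) − Q({x : h(x) = 1})|`. -/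
noncomputable def dH {X : Type*} [MeasurableSpace X] (H : Set (X → ℝ))
    (P Q : Measure X) : ℝ :=
  sSup ((fun h => |(P {x | h x = 1}).toReal - (Q {x | h x = 1}).toReal|) '' H)

/-- The empirical distribution of the sample `ω = (x_1, …, x_n)`: the uniform
measure on the sample points. -/
noncomputable def empD {X : Type*} [MeasurableSpace X] {n : ℕ} (ω : Fin n → X) : Measure X :=
  ((n : ℝ≥0∞))⁻¹ • ∑ i, Measure.dirac (ω i)

/-!
Changing one sample point moves the supremum of `∫ f ∂D - (1/n) ∑ i, f (x i)` over the class and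
the Rademacher complexity by at most `(b - a) / n` each if the class takes its values in `[a, b]`,
so their combination `G` with coefficients `1` and `-2` has bounded differences `3 (b - a) / n`: one
application of McDiarmid's inequality to `G` yields the factor `3` before the square root. The mean
of `G` is nonpositive by symmetrization: replacing `∫ f ∂D` by the empirical mean of an independent
ghost sample only increases the expected supremum, swapping a point with its ghost copy does not
change the joint law and multiplies its term by `-1`, and averaging over all sign vectors gives
twice the Rademacher complexity. The absolute value in the divergence costs a union bound over the
class and its negative, hence `log (2 / δ)`.

McDiarmid's inequality is proved by induction on the number of coordinates: averaging out all
coordinates but the first leaves a function of oscillation at most `c 0`, to which Hoeffding's lemma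
applies, and sub-Gaussian moment generating functions multiply along a product measure.
-/

/-- McDiarmid's condition: changing the `i`-th argument of `f` alone changes its value by at most
`c i`. The change of one argument is encoded by `Function.update`. -/
def HasBoundedDifferences {ι : Type*} [DecidableEq ι] {X : ι → Type*}
    (f : (∀ i, X i) → ℝ) (c : ι → ℝ) : Prop :=
  ∀ ω i x, |f (Function.update ω i x) - f ω| ≤ c i

lemma abs_ciSup_sub_ciSup_le {κ : Type*} [Nonempty κ] {u v : κ → ℝ} {c : ℝ}
    (hu : BddAbove (range u)) (hv : BddAbove (range v)) (huv : ∀ k, |u k - v k| ≤ c) :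
    |(⨆ k, u k) - ⨆ k, v k| ≤ c := by
  have u_le : ⨆ k, u k ≤ (⨆ k, v k) + c := ciSup_le fun k => by
    linarith [(abs_le.1 (huv k)).2, le_ciSup hv k]
  have v_le : ⨆ k, v k ≤ (⨆ k, u k) + c := ciSup_le fun k => by
    linarith [(abs_le.1 (huv k)).1, le_ciSup hu k]
  rw [abs_le]
  constructor <;> linarith

namespace HasBoundedDifferences

variable {ι : Type*} [DecidableEq ι] {X : ι → Type*} {f g : (∀ i, X i) → ℝ} {c d : ι → ℝ}

lemma sub (hf : HasBoundedDifferences f c) (hg : HasBoundedDifferences g d) :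
    HasBoundedDifferences (fun ω => f ω - g ω) (fun i => c i + d i) := fun ω i x => by
  rw [sub_sub_sub_comm]
  exact (abs_sub _ _).trans (add_le_add (hf ω i x) (hg ω i x))

lemma const_mul (hf : HasBoundedDifferences f c) (a : ℝ) :
    HasBoundedDifferences (fun ω => a * f ω) (fun i => |a| * c i) := fun ω i x => by
  rw [← mul_sub, abs_mul]
  exact mul_le_mul_of_nonneg_left (hf ω i x) (abs_nonneg a)

lemma sum {κ : Type*} {s : Finset κ} {F : κ → (∀ i, X i) → ℝ} {C : κ → ι → ℝ}
    (hF : ∀ k ∈ s, HasBoundedDifferences (F k) (C k)) :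
    HasBoundedDifferences (fun ω => ∑ k ∈ s, F k ω) (fun i => ∑ k ∈ s, C k i) := fun ω i x => by
  rw [← Finset.sum_sub_distrib]
  exact (Finset.abs_sum_le_sum_abs _ _).trans (Finset.sum_le_sum fun k hk => hF k hk ω i x)

lemma iSup {κ : Type*} [Nonempty κ] {F : κ → (∀ i, X i) → ℝ}
    (hbdd : ∀ ω, BddAbove (range fun k => F k ω)) (hF : ∀ k, HasBoundedDifferences (F k) c) :
    HasBoundedDifferences (fun ω => ⨆ k, F k ω) c := fun ω i x =>
  abs_ciSup_sub_ciSup_le (hbdd _) (hbdd _) fun k => hF k ω i x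

lemma abs_sub_le_sum [Fintype ι] (hf : HasBoundedDifferences f c) (ω ω' : ∀ i, X i) :
    |f ω - f ω'| ≤ ∑ i, c i := by
  suffices agree_off : ∀ (s : Finset ι) (ω : ∀ i, X i), (∀ i ∉ s, ω i = ω' i) →
      |f ω - f ω'| ≤ ∑ i ∈ s, c i from agree_off Finset.univ ω (by simp)
  intro s
  induction s using Finset.induction_on with
  | empty =>
    intro ω h
    have : ω = ω' := funext fun i => h i (Finset.notMem_empty i)
    simp [this]
  | insert a s ha ih =>
    intro ω h
    have tail_le : |f (Function.update ω a (ω' a)) - f ω'| ≤ ∑ i ∈ s, c i := by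
      refine ih _ fun i hi => ?_
      rcases eq_or_ne i a with rfl | hia
      · simp
      · simpa [hia] using h i (by simp [hia, hi])
    rw [Finset.sum_insert ha]
    calc |f ω - f ω'|
        ≤ |f ω - f (Function.update ω a (ω' a))| + |f (Function.update ω a (ω' a)) - f ω'| :=
          abs_sub_le _ _ _
      _ ≤ c a + ∑ i ∈ s, c i := by
          rw [abs_sub_comm (f ω)]
          exact add_le_add (hf ω a (ω' a)) tail_le

lemma integrable [Finite ι] [∀ i, MeasurableSpace (X i)] {P : Measure (∀ i, X i)}
    [IsFiniteMeasure P] (hf : HasBoundedDifferences f c) (hfm : Measurable f) :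
    Integrable f P := by
  have := Fintype.ofFinite ι
  rcases isEmpty_or_nonempty (∀ i, X i) with _ | ⟨⟨ω₀⟩⟩
  · exact .of_isEmpty
  · refine .of_bound hfm.aestronglyMeasurable (∑ i, c i + |f ω₀|) (.of_forall fun ω => ?_)
    have := abs_add_le (f ω - f ω₀) (f ω₀)
    rw [sub_add_cancel] at this
    exact this.trans (by gcongr; exact hf.abs_sub_le_sum ω ω₀)

end HasBoundedDifferences

lemma integral_comp_of_measurePreserving {X Y E : Type*} [MeasurableSpace X] [MeasurableSpace Y]
    [NormedAddCommGroup E] [NormedSpace ℝ E] {μ : Measure X} {ν : Measure Y} {Φ : X → Y}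
    {g : Y → E} (hΦ : MeasurePreserving Φ μ ν) (hg : AEStronglyMeasurable g ν) :
    ∫ x, g (Φ x) ∂μ = ∫ y, g y ∂ν := by
  rw [← integral_map hΦ.aemeasurable (hΦ.map_eq.symm ▸ hg), hΦ.map_eq]

section McDiarmid

open ProbabilityTheory
open scoped NNReal

lemma hasSubgaussianMGF_sub_integral_of_abs_sub_le {X : Type*} [MeasurableSpace X] {μ : Measure X}
    [IsProbabilityMeasure μ] {g : X → ℝ} {c : ℝ} (hg : AEMeasurable g μ)
    (hc : ∀ x y, |g x - g y| ≤ c) :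
    HasSubgaussianMGF (fun x => g x - ∫ y, g y ∂μ) ((‖c‖₊ / 2) ^ 2) μ := by
  have : Nonempty X := μ.nonempty_of_neZero
  have hbdd (x : X) : BddBelow (range g) :=
    ⟨g x - c, by rintro _ ⟨y, rfl⟩; linarith [(abs_le.1 (hc x y)).2]⟩
  have hmem (x : X) : g x ∈ Icc (⨅ y, g y) ((⨅ y, g y) + c) :=
    ⟨ciInf_le (hbdd x) x, by
      linarith [le_ciInf fun y => show g x - c ≤ g y by linarith [(abs_le.1 (hc x y)).2]]⟩
  simpa only [add_sub_cancel_left] using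
    hasSubgaussianMGF_of_mem_Icc hg (Filter.Eventually.of_forall hmem)

lemma hasSubgaussianMGF_prod_add {X Y : Type*} [MeasurableSpace X] [MeasurableSpace Y]
    {μ : Measure X} {ν : Measure Y} [SFinite μ] [SFinite ν] {Z : X → ℝ} {W : X × Y → ℝ}
    {cZ cW : ℝ≥0} (hZ : HasSubgaussianMGF Z cZ μ)
    (hW : ∀ x, HasSubgaussianMGF (fun y => W (x, y)) cW ν)
    (hWm : AEStronglyMeasurable W (μ.prod ν)) :
    HasSubgaussianMGF (fun p => Z p.1 + W p) (cZ + cW) (μ.prod ν) := by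
  have slice_integral (t : ℝ) (x : X) : ∫ y, Real.exp (t * (Z x + W (x, y))) ∂ν =
      Real.exp (t * Z x) * mgf (fun y => W (x, y)) ν t := by
    simp only [mgf, mul_add, Real.exp_add, integral_const_mul]
  have slice_le (t : ℝ) (x : X) : Real.exp (t * Z x) * mgf (fun y => W (x, y)) ν t ≤
      Real.exp (t * Z x) * Real.exp (cW * t ^ 2 / 2) := by
    gcongr
    exact (hW x).mgf_le t
  have dominating_integrable (t : ℝ) :
      Integrable (fun x => Real.exp (t * Z x) * Real.exp (cW * t ^ 2 / 2)) μ :=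
    (hZ.integrable_exp_mul t).mul_const _
  have exp_integrable (t : ℝ) :
      Integrable (fun p => Real.exp (t * (Z p.1 + W p))) (μ.prod ν) := by
    have hZm : AEStronglyMeasurable (fun p : X × Y => Z p.1) (μ.prod ν) :=
      hZ.aestronglyMeasurable.comp_fst
    have hm : AEStronglyMeasurable (fun p => Real.exp (t * (Z p.1 + W p))) (μ.prod ν) :=
      Real.continuous_exp.comp_aestronglyMeasurable ((hZm.add hWm).const_mul t)
    refine (integrable_prod_iff hm).2 ⟨.of_forall fun x => ?_, ?_⟩
    · simpa only [mul_add, Real.exp_add] using ((hW x).integrable_exp_mul t).const_mul _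
    · refine (dominating_integrable t).mono' hm.norm.integral_prod_right' (.of_forall fun x => ?_)
      simp only [Real.norm_eq_abs, Real.abs_exp, slice_integral]
      rw [abs_of_nonneg (mul_nonneg (Real.exp_nonneg _) mgf_nonneg)]
      exact slice_le t x
  refine ⟨exp_integrable, fun t => ?_⟩
  calc ∫ p, Real.exp (t * (Z p.1 + W p)) ∂(μ.prod ν)
      = ∫ x, Real.exp (t * Z x) * mgf (fun y => W (x, y)) ν t ∂μ := by
        simp only [integral_prod _ (exp_integrable t), slice_integral]
    _ ≤ mgf Z μ t * Real.exp (cW * t ^ 2 / 2) := by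
        rw [mgf, ← integral_mul_const]
        exact integral_mono_of_nonneg
          (.of_forall fun x => mul_nonneg (Real.exp_nonneg _) mgf_nonneg)
          (dominating_integrable t) (.of_forall (slice_le t))
    _ ≤ Real.exp (cZ * t ^ 2 / 2) * Real.exp (cW * t ^ 2 / 2) := by
        gcongr
        exact hZ.mgf_le t
    _ = Real.exp ((cZ + cW : ℝ≥0) * t ^ 2 / 2) := by
        rw [← Real.exp_add, NNReal.coe_add]
        ring_nf

lemma hasSubgaussianMGF_of_comp_measurePreserving {X Y : Type*} [MeasurableSpace X]
    [MeasurableSpace Y] {μ : Measure X} {ν : Measure Y} {Φ : X → Y} {Z : Y → ℝ} {c : ℝ≥0}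
    (hΦ : MeasurePreserving Φ μ ν) (hZ : AEMeasurable Z ν) (h : HasSubgaussianMGF (Z ∘ Φ) c μ) :
    HasSubgaussianMGF Z c ν :=
  h.congr_identDistrib
    ⟨h.aemeasurable, hZ, by
      rw [← AEMeasurable.map_map_of_aemeasurable (by rwa [hΦ.map_eq]) hΦ.aemeasurable, hΦ.map_eq]⟩

lemma measurePreserving_finCons {n : ℕ} {X : Fin (n + 1) → Type*} [∀ i, MeasurableSpace (X i)]
    (μ : ∀ i, Measure (X i)) [∀ i, SigmaFinite (μ i)] :
    MeasurePreserving (fun p : X 0 × (∀ j : Fin n, X j.succ) => (Fin.cons p.1 p.2 : ∀ i, X i))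
      ((μ 0).prod (Measure.pi fun j => μ j.succ)) (Measure.pi μ) := by
  have cons_eq : (fun p : X 0 × (∀ j : Fin n, X j.succ) => (Fin.cons p.1 p.2 : ∀ i, X i)) =
      (MeasurableEquiv.piFinSuccAbove X 0).symm := by
    ext p i
    cases i using Fin.cases <;> rfl
  rw [cons_eq]
  exact (measurePreserving_piFinSuccAbove μ 0).symm

namespace HasBoundedDifferences

lemma comp_finCons {n : ℕ} {X : Fin (n + 1) → Type*} {f : (∀ i, X i) → ℝ} {c : Fin (n + 1) → ℝ}
    (hf : HasBoundedDifferences f c) (x : X 0) :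
    HasBoundedDifferences (fun ω : ∀ j : Fin n, X j.succ => f (Fin.cons x ω))
      (fun j => c j.succ) := fun ω j y => by
  simpa only [Fin.cons_update] using hf (Fin.cons x ω) j.succ y

lemma abs_integral_finCons_sub_le {n : ℕ} {X : Fin (n + 1) → Type*} [∀ i, MeasurableSpace (X i)]
    {f : (∀ i, X i) → ℝ} {c : Fin (n + 1) → ℝ} (hf : HasBoundedDifferences f c)
    (P : Measure (∀ j : Fin n, X j.succ)) [IsProbabilityMeasure P]
    (hint : ∀ x, Integrable (fun ω => f (Fin.cons x ω)) P) (x y : X 0) :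
    |∫ ω, f (Fin.cons x ω) ∂P - ∫ ω, f (Fin.cons y ω) ∂P| ≤ c 0 := by
  rw [← integral_sub (hint x) (hint y)]
  have pointwise_le (ω : ∀ j : Fin n, X j.succ) :
      ‖f (Fin.cons x ω) - f (Fin.cons y ω)‖ ≤ c 0 := by
    simpa only [Fin.update_cons_zero, Real.norm_eq_abs] using hf (Fin.cons y ω) 0 x
  simpa using norm_integral_le_of_norm_le_const (μ := P) (.of_forall pointwise_le)

theorem hasSubgaussianMGF {n : ℕ} {X : Fin n → Type*} [∀ i, MeasurableSpace (X i)]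
    (μ : ∀ i, Measure (X i)) [∀ i, IsProbabilityMeasure (μ i)] {f : (∀ i, X i) → ℝ}
    {c : Fin n → ℝ} (hf : HasBoundedDifferences f c) (hfm : Measurable f) :
    HasSubgaussianMGF (fun ω => f ω - ∫ ω', f ω' ∂(Measure.pi μ)) (∑ i, (‖c i‖₊ / 2) ^ 2)
      (Measure.pi μ) := by
  induction n with
  | zero =>
    have f_const : f = fun _ => f finZeroElim := funext fun ω => congrArg f (Subsingleton.elim _ _)
    rw [f_const]
    simp
  | succ n ih =>
    set P := Measure.pi fun j : Fin n => μ j.succ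
    have hcons := measurePreserving_finCons μ
    have hFm : Measurable fun p : X 0 × (∀ j : Fin n, X j.succ) => f (Fin.cons p.1 p.2) :=
      hfm.comp hcons.measurable
    have hslice (x : X 0) : Measurable fun ω : ∀ j : Fin n, X j.succ => f (Fin.cons x ω) :=
      hFm.comp measurable_prodMk_left
    set g : X 0 → ℝ := fun x => ∫ ω, f (Fin.cons x ω) ∂P
    have hgm : StronglyMeasurable g := hFm.stronglyMeasurable.integral_prod_right'
    have integral_g : ∫ x, g x ∂(μ 0) = ∫ ω, f ω ∂(Measure.pi μ) := by
      have hFint : Integrable (fun p : X 0 × (∀ j : Fin n, X j.succ) => f (Fin.cons p.1 p.2))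
          ((μ 0).prod P) := hcons.integrable_comp_of_integrable (hf.integrable hfm)
      rw [← integral_comp_of_measurePreserving hcons hfm.aestronglyMeasurable,
        integral_prod _ hFint]
    have head_subgaussian := hasSubgaussianMGF_sub_integral_of_abs_sub_le (μ := μ 0)
      hgm.measurable.aemeasurable (hf.abs_integral_finCons_sub_le P fun x =>
        (hf.comp_finCons x).integrable (hslice x))
    have total := hasSubgaussianMGF_prod_add head_subgaussian
      (W := fun p => f (Fin.cons p.1 p.2) - g p.1) (ν := P)
      (fun x => ih (fun j => μ j.succ) (hf.comp_finCons x) (hslice x))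
      (hFm.sub (hgm.measurable.comp measurable_fst)).aestronglyMeasurable
    refine hasSubgaussianMGF_of_comp_measurePreserving hcons (by fun_prop) ?_
    rw [Fin.sum_univ_succ, ← integral_g]
    convert total using 2
    simp

theorem measureReal_sub_integral_ge_le {n : ℕ} {X : Fin n → Type*} [∀ i, MeasurableSpace (X i)]
    (μ : ∀ i, Measure (X i)) [∀ i, IsProbabilityMeasure (μ i)] {f : (∀ i, X i) → ℝ}
    {c : Fin n → ℝ} (hf : HasBoundedDifferences f c) (hfm : Measurable f) {ε : ℝ} (hε : 0 ≤ ε) :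
    (Measure.pi μ).real {ω | ε ≤ f ω - ∫ ω', f ω' ∂(Measure.pi μ)} ≤
      Real.exp (-(2 * ε ^ 2 / ∑ i, c i ^ 2)) := by
  refine ((hf.hasSubgaussianMGF μ hfm).measure_ge_le hε).trans_eq (congrArg Real.exp ?_)
  have variance_proxy : (∑ i, (‖c i‖₊ / 2) ^ 2 : ℝ≥0) = (∑ i, c i ^ 2) / 4 := by
    push_cast
    simp only [div_pow, Real.norm_eq_abs, sq_abs, Finset.sum_div]
    norm_num
  rw [variance_proxy]
  ring

end HasBoundedDifferences

end McDiarmid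

/-- The supremum over the class `f` of the empirical averages of the sample `ω` with weights `w`,
the common form of the one-sided deviation of empirical means (all weights `1`, centered class) and
of the suprema averaged in `radS` (weights `±1`). -/
noncomputable def supAvg {X κ : Type*} {n : ℕ} (f : κ → X → ℝ) (w : Fin n → ℝ) (ω : Fin n → X) :
    ℝ :=
  ⨆ k, (1 / (n : ℝ)) * ∑ i, w i * f k (ω i)

section SupAvg

variable {X κ : Type*} {n : ℕ} {f : κ → X → ℝ} {M : ℝ}

lemma abs_weighted_avg_le (hM : ∀ k x, |f k x| ≤ M) (w : Fin n → ℝ) (ω : Fin n → X) (k : κ) :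
    |(1 / (n : ℝ)) * ∑ i, w i * f k (ω i)| ≤ (1 / (n : ℝ)) * ∑ i, |w i| * M := by
  rw [abs_mul, abs_of_nonneg (by positivity : (0 : ℝ) ≤ 1 / n)]
  gcongr
  refine (Finset.abs_sum_le_sum_abs _ _).trans (Finset.sum_le_sum fun i _ => ?_)
  rw [abs_mul]
  gcongr
  exact hM k (ω i)

lemma bddAbove_range_weighted_avg (hM : ∀ k x, |f k x| ≤ M) (w : Fin n → ℝ) (ω : Fin n → X) :
    BddAbove (range fun k => (1 / (n : ℝ)) * ∑ i, w i * f k (ω i)) :=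
  ⟨_, forall_mem_range.2 fun k => (abs_le.1 (abs_weighted_avg_le hM w ω k)).2⟩

lemma weighted_avg_le_supAvg (hM : ∀ k x, |f k x| ≤ M) (w : Fin n → ℝ) (ω : Fin n → X) (k : κ) :
    (1 / (n : ℝ)) * ∑ i, w i * f k (ω i) ≤ supAvg f w ω :=
  le_ciSup (bddAbove_range_weighted_avg hM w ω) k

lemma abs_supAvg_le [Nonempty κ] (hM : ∀ k x, |f k x| ≤ M) (w : Fin n → ℝ) (ω : Fin n → X) :
    |supAvg f w ω| ≤ (1 / (n : ℝ)) * ∑ i, |w i| * M := by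
  obtain ⟨k₀⟩ := ‹Nonempty κ›
  exact abs_le.2 ⟨(abs_le.1 (abs_weighted_avg_le hM w ω k₀)).1.trans
    (weighted_avg_le_supAvg hM w ω k₀),
    ciSup_le fun k => (abs_le.1 (abs_weighted_avg_le hM w ω k)).2⟩

lemma hasBoundedDifferences_supAvg [Nonempty κ] {c : ℝ} (hM : ∀ k x, |f k x| ≤ M)
    (hc : ∀ k x y, |f k x - f k y| ≤ c) (w : Fin n → ℝ) :
    HasBoundedDifferences (supAvg f w) (fun i => |w i| * c / n) := by
  refine .iSup (bddAbove_range_weighted_avg hM w) fun k ω i x => ?_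
  have changed_term : ∑ j, w j * f k (Function.update ω i x j) - ∑ j, w j * f k (ω j) =
      w i * (f k x - f k (ω i)) := by
    rw [← Finset.sum_sub_distrib, Finset.sum_eq_single i (fun j _ hj => by simp [hj]) (by simp)]
    simp [mul_sub]
  rw [← mul_sub, changed_term, abs_mul, abs_mul, abs_of_nonneg (by positivity : (0 : ℝ) ≤ 1 / n),
    one_div_mul_eq_div]
  gcongr
  exact hc k x (ω i)

variable [MeasurableSpace X] [Countable κ]

@[fun_prop]
lemma measurable_supAvg (hf : ∀ k, Measurable (f k)) (w : Fin n → ℝ) :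
    Measurable (supAvg f w) := by
  unfold supAvg
  fun_prop

lemma integrable_supAvg [Nonempty κ] {P : Measure (Fin n → X)} [IsFiniteMeasure P]
    (hf : ∀ k, Measurable (f k)) (hM : ∀ k x, |f k x| ≤ M) (w : Fin n → ℝ) :
    Integrable (supAvg f w) P :=
  .of_bound (measurable_supAvg hf w).aestronglyMeasurable _ (.of_forall (abs_supAvg_le hM w))

end SupAvg

section Rademacher

/-- The vector of `±1` weights encoded by `σ`, with the convention of `radS`. -/
def signWeights {n : ℕ} (σ : Fin n → Bool) : Fin n → ℝ := fun i => if σ i then 1 else -1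

variable {n : ℕ}

lemma signWeights_eq_one_or_neg_one (σ : Fin n → Bool) (i : Fin n) :
    signWeights σ i = 1 ∨ signWeights σ i = -1 := by
  cases h : σ i <;> simp [signWeights, h]

lemma abs_signWeights (σ : Fin n → Bool) (i : Fin n) : |signWeights σ i| = 1 := by
  rcases signWeights_eq_one_or_neg_one σ i with h | h <;> simp [h]

lemma signWeights_not (σ : Fin n → Bool) : signWeights (fun i => !σ i) = -signWeights σ := by
  ext i
  cases h : σ i <;> simp [signWeights, h]

lemma sum_comp_not {A : Type*} [AddCommMonoid A] (F : (Fin n → Bool) → A) :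
    ∑ σ : Fin n → Bool, F (fun i => !σ i) = ∑ σ, F σ :=
  Equiv.sum_comp (Equiv.arrowCongr (.refl _) Equiv.boolNot) F

variable {X κ : Type*} {f : κ → X → ℝ}

lemma radS_range (f : κ → X → ℝ) (ω : Fin n → X) :
    radS ω (range f) = (∑ σ, supAvg f (signWeights σ) ω) / 2 ^ n := by
  simp only [radS, supAvg, signWeights, ← range_comp, sSup_range]
  rfl

lemma radS_range_neg (f : κ → X → ℝ) (ω : Fin n → X) :
    radS ω (range (-f)) = radS ω (range f) := by
  rw [radS_range, radS_range, ← sum_comp_not]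
  simp [supAvg, signWeights_not]

lemma hasBoundedDifferences_radS [Nonempty κ] {M c : ℝ} (hM : ∀ k x, |f k x| ≤ M)
    (hc : ∀ k x y, |f k x - f k y| ≤ c) :
    HasBoundedDifferences (fun ω : Fin n → X => radS ω (range f)) (fun _ => c / n) := by
  have average := (HasBoundedDifferences.sum (s := Finset.univ) fun (σ : Fin n → Bool) _ =>
    hasBoundedDifferences_supAvg hM hc (signWeights σ)).const_mul (2 ^ n)⁻¹
  simpa [radS_range, abs_signWeights, div_eq_inv_mul] using average

lemma measurable_radS [MeasurableSpace X] [Countable κ] (hf : ∀ k, Measurable (f k)) :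
    Measurable fun ω : Fin n → X => radS ω (range f) := by
  simp only [radS_range]
  fun_prop (disch := assumption)

lemma integrable_radS [MeasurableSpace X] [Countable κ] [Nonempty κ] {P : Measure (Fin n → X)}
    [IsFiniteMeasure P] {M : ℝ} (hf : ∀ k, Measurable (f k)) (hM : ∀ k x, |f k x| ≤ M) :
    Integrable (fun ω : Fin n → X => radS ω (range f)) P := by
  simp only [radS_range]
  exact (integrable_finsetSum _ fun σ _ => integrable_supAvg hf hM _).div_const _

end Rademacher

section Symmetrization

variable {X κ : Type*}

/-- The class of differences `f k y - f k x` on pairs `(x, y)`: the first coordinate is a sample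
point, the second one its ghost copy. -/
def ghostDiff (f : κ → X → ℝ) (k : κ) (z : X × X) : ℝ := f k z.2 - f k z.1

/-- The class of deviations `∫ f k ∂D - f k x`, whose averages over a sample are the differences
between true and empirical means. -/
noncomputable def meanDeviation [MeasurableSpace X] (D : Measure X) (f : κ → X → ℝ) (k : κ)
    (x : X) : ℝ :=
  ∫ y, f k y ∂D - f k x

variable {n : ℕ} {f : κ → X → ℝ} {M : ℝ}

lemma abs_ghostDiff_le (hM : ∀ k x, |f k x| ≤ M) (k : κ) (z : X × X) :
    |ghostDiff f k z| ≤ M + M :=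
  (abs_sub _ _).trans (add_le_add (hM k z.2) (hM k z.1))

lemma supAvg_ghostDiff_le [Nonempty κ] (hM : ∀ k x, |f k x| ≤ M) (w : Fin n → ℝ)
    (z : Fin n → X × X) :
    supAvg (ghostDiff f) w z ≤
      supAvg f w (fun i => (z i).2) + supAvg f (-w) (fun i => (z i).1) := by
  refine ciSup_le fun k => ?_
  calc (1 / (n : ℝ)) * ∑ i, w i * ghostDiff f k (z i)
      = (1 / (n : ℝ)) * ∑ i, w i * f k (z i).2 + (1 / (n : ℝ)) * ∑ i, (-w) i * f k (z i).1 := by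
        rw [← mul_add, ← Finset.sum_add_distrib]
        simp only [ghostDiff, Pi.neg_apply, mul_sub, neg_mul, ← sub_eq_add_neg]
    _ ≤ _ := add_le_add (weighted_avg_le_supAvg hM w (fun i => (z i).2) k)
        (weighted_avg_le_supAvg hM (-w) (fun i => (z i).1) k)

variable [MeasurableSpace X]

lemma measurable_ghostDiff (hf : ∀ k, Measurable (f k)) (k : κ) : Measurable (ghostDiff f k) :=
  ((hf k).comp measurable_snd).sub ((hf k).comp measurable_fst)

variable (D : Measure X)

lemma measurable_meanDeviation (hf : ∀ k, Measurable (f k)) (k : κ) :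
    Measurable (meanDeviation D f k) :=
  (hf k).const_sub _

variable [IsProbabilityMeasure D]

lemma abs_meanDeviation_le (hM : ∀ k x, |f k x| ≤ M) (k : κ) (x : X) :
    |meanDeviation D f k x| ≤ M + M := by
  have abs_mean_le : |∫ y, f k y ∂D| ≤ M := by
    simpa using norm_integral_le_of_norm_le_const (μ := D) (f := f k) (.of_forall (hM k))
  exact (abs_sub _ _).trans (add_le_add abs_mean_le (hM k x))

lemma integral_ghostDiff {k : κ} (hint : Integrable (f k) D) (x : X) :
    ∫ y, ghostDiff f k (x, y) ∂D = meanDeviation D f k x := by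
  simp only [ghostDiff, meanDeviation]
  rw [integral_sub hint (integrable_const _), integral_const, probReal_univ, one_smul]

variable [Countable κ]

lemma integral_supAvg_ghostDiff_eq (hf : ∀ k, Measurable (f k))
    {w : Fin n → ℝ} (hw : ∀ i, w i = 1 ∨ w i = -1) :
    ∫ z, supAvg (ghostDiff f) w z ∂(Measure.pi fun _ => D.prod D) =
      ∫ z, supAvg (ghostDiff f) 1 z ∂(Measure.pi fun _ : Fin n => D.prod D) := by
  let flip (i : Fin n) : X × X → X × X := if w i = 1 then id else Prod.swap
  have hflip : MeasurePreserving (fun (z : Fin n → X × X) i => flip i (z i))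
      (Measure.pi fun _ => D.prod D) (Measure.pi fun _ => D.prod D) := by
    refine measurePreserving_pi _ _ fun i => ?_
    by_cases h : w i = 1
    · simpa only [flip, if_pos h] using MeasurePreserving.id _
    · simpa only [flip, if_neg h] using Measure.measurePreserving_swap
  have ghostDiff_flip (k : κ) (i : Fin n) (z : X × X) :
      ghostDiff f k (flip i z) = w i * ghostDiff f k z := by
    by_cases h : w i = 1
    · simp [flip, h]
    · simp only [flip, if_neg h, (hw i).resolve_left h, ghostDiff, Prod.fst_swap, Prod.snd_swap]
      ring
  have supAvg_flip (z : Fin n → X × X) :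
      supAvg (ghostDiff f) 1 (fun i => flip i (z i)) = supAvg (ghostDiff f) w z := by
    simp only [supAvg, ghostDiff_flip, Pi.one_apply, one_mul]
  rw [← integral_comp_of_measurePreserving hflip
    (measurable_supAvg (measurable_ghostDiff hf) 1).aestronglyMeasurable]
  simp only [supAvg_flip]

variable [Nonempty κ]

lemma supAvg_meanDeviation_le_integral (hf : ∀ k, Measurable (f k)) (hM : ∀ k x, |f k x| ≤ M)
    (w : Fin n → ℝ) (ω : Fin n → X) :
    supAvg (meanDeviation D f) w ω ≤
      ∫ ω', supAvg (ghostDiff f) w (fun i => (ω i, ω' i)) ∂(Measure.pi fun _ => D) := by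
  set P := Measure.pi fun _ : Fin n => D
  have slice_measurable (k : κ) (x : X) : Measurable fun y => ghostDiff f k (x, y) :=
    (measurable_ghostDiff hf k).comp measurable_prodMk_left
  have term_integrable (k : κ) (i : Fin n) :
      Integrable (fun ω' : Fin n → X => w i * ghostDiff f k (ω i, ω' i)) P :=
    (Integrable.of_bound (f := fun ω' : Fin n → X => ghostDiff f k (ω i, ω' i))
      ((slice_measurable k (ω i)).comp (measurable_pi_apply i)).aestronglyMeasurable _
      (.of_forall fun ω' => abs_ghostDiff_le hM k (ω i, ω' i))).const_mul _
  have sup_integrable : Integrable (fun ω' => supAvg (ghostDiff f) w fun i => (ω i, ω' i)) P :=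
    .of_bound ((measurable_supAvg (measurable_ghostDiff hf) w).comp
      (by fun_prop : Measurable fun (ω' : Fin n → X) i => (ω i, ω' i))).aestronglyMeasurable _
      (.of_forall fun ω' => abs_supAvg_le (abs_ghostDiff_le hM) w _)
  have ghost_mean (k : κ) (i : Fin n) :
      ∫ ω', ghostDiff f k (ω i, ω' i) ∂P = meanDeviation D f k (ω i) := by
    rw [integral_comp_eval (μ := fun _ => D) (f := fun y => ghostDiff f k (ω i, y))
        (slice_measurable k (ω i)).aestronglyMeasurable,
      integral_ghostDiff D (.of_bound (hf k).aestronglyMeasurable M (.of_forall (hM k)))]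
  refine ciSup_le fun k => ?_
  calc (1 / (n : ℝ)) * ∑ i, w i * meanDeviation D f k (ω i)
      = ∫ ω', (1 / (n : ℝ)) * ∑ i, w i * ghostDiff f k (ω i, ω' i) ∂P := by
        simp only [integral_const_mul, integral_finsetSum _ fun i _ => term_integrable k i,
          ghost_mean]
    _ ≤ _ := integral_mono ((integrable_finsetSum _ fun i _ => term_integrable k i).const_mul _)
        sup_integrable
        fun ω' => weighted_avg_le_supAvg (abs_ghostDiff_le hM) w (fun i => (ω i, ω' i)) k

lemma integral_supAvg_meanDeviation_le (hf : ∀ k, Measurable (f k)) (hM : ∀ k x, |f k x| ≤ M)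
    (w : Fin n → ℝ) :
    ∫ ω, supAvg (meanDeviation D f) w ω ∂(Measure.pi fun _ => D) ≤
      ∫ z, supAvg (ghostDiff f) w z ∂(Measure.pi fun _ => D.prod D) := by
  have hzip : MeasurePreserving
      (fun p : (Fin n → X) × (Fin n → X) => fun i => (p.1 i, p.2 i))
      ((Measure.pi fun _ => D).prod (Measure.pi fun _ => D))
      (Measure.pi fun _ => D.prod D) :=
    (measurePreserving_arrowProdEquivProdArrow X X (Fin n) (fun _ => D) (fun _ => D)).symm
  have ghost_measurable := measurable_supAvg (n := n) (measurable_ghostDiff hf) w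
  have ghost_integrable := hzip.integrable_comp_of_integrable
    (integrable_supAvg (measurable_ghostDiff hf) (abs_ghostDiff_le hM) w)
  calc ∫ ω, supAvg (meanDeviation D f) w ω ∂(Measure.pi fun _ => D)
      ≤ ∫ ω, ∫ ω', supAvg (ghostDiff f) w (fun i => (ω i, ω' i)) ∂(Measure.pi fun _ => D)
          ∂(Measure.pi fun _ => D) :=
        integral_mono (integrable_supAvg (measurable_meanDeviation D hf)
          (abs_meanDeviation_le D hM) w) ghost_integrable.integral_prod_left
          (supAvg_meanDeviation_le_integral D hf hM w)
    _ = ∫ z, supAvg (ghostDiff f) w z ∂(Measure.pi fun _ => D.prod D) := by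
        rw [← integral_comp_of_measurePreserving hzip ghost_measurable.aestronglyMeasurable]
        exact (integral_prod _ ghost_integrable).symm

lemma integral_supAvg_ghostDiff_le (hf : ∀ k, Measurable (f k)) (hM : ∀ k x, |f k x| ≤ M)
    (w : Fin n → ℝ) :
    ∫ z, supAvg (ghostDiff f) w z ∂(Measure.pi fun _ => D.prod D) ≤
      ∫ ω, supAvg f w ω ∂(Measure.pi fun _ => D) +
        ∫ ω, supAvg f (-w) ω ∂(Measure.pi fun _ => D) := by
  have hsnd : MeasurePreserving (fun (z : Fin n → X × X) i => (z i).2)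
      (Measure.pi fun _ => D.prod D) (Measure.pi fun _ => D) :=
    measurePreserving_pi _ _ fun _ => measurePreserving_snd
  have hfst : MeasurePreserving (fun (z : Fin n → X × X) i => (z i).1)
      (Measure.pi fun _ => D.prod D) (Measure.pi fun _ => D) :=
    measurePreserving_pi _ _ fun _ => measurePreserving_fst
  have snd_integrable := hsnd.integrable_comp_of_integrable (integrable_supAvg hf hM w)
  have fst_integrable := hfst.integrable_comp_of_integrable (integrable_supAvg hf hM (-w))
  calc ∫ z, supAvg (ghostDiff f) w z ∂(Measure.pi fun _ => D.prod D)
      ≤ ∫ z, (supAvg f w (fun i => (z i).2) + supAvg f (-w) (fun i => (z i).1))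
          ∂(Measure.pi fun _ => D.prod D) :=
        integral_mono (integrable_supAvg (measurable_ghostDiff hf) (abs_ghostDiff_le hM) w)
          (snd_integrable.add fst_integrable) (supAvg_ghostDiff_le hM w)
    _ = _ := by
        rw [← integral_comp_of_measurePreserving hsnd
            (measurable_supAvg hf w).aestronglyMeasurable,
          ← integral_comp_of_measurePreserving hfst
            (measurable_supAvg hf (-w)).aestronglyMeasurable]
        exact integral_add snd_integrable fst_integrable

theorem integral_supAvg_meanDeviation_le_radS (hf : ∀ k, Measurable (f k))
    (hM : ∀ k x, |f k x| ≤ M) :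
    ∫ ω, supAvg (meanDeviation D f) 1 ω ∂(Measure.pi fun _ : Fin n => D) ≤
      2 * ∫ ω, radS ω (range f) ∂(Measure.pi fun _ : Fin n => D) := by
  set P := Measure.pi fun _ : Fin n => D
  have le_of_signs (σ : Fin n → Bool) : ∫ ω, supAvg (meanDeviation D f) 1 ω ∂P ≤
      ∫ ω, supAvg f (signWeights σ) ω ∂P + ∫ ω, supAvg f (signWeights fun i => !σ i) ω ∂P := by
    rw [signWeights_not]
    exact (integral_supAvg_meanDeviation_le D hf hM 1).trans
      ((integral_supAvg_ghostDiff_eq D hf (signWeights_eq_one_or_neg_one σ)).symm.trans_le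
        (integral_supAvg_ghostDiff_le D hf hM _))
  have integral_radS : ∫ ω, radS ω (range f) ∂P =
      (∑ σ : Fin n → Bool, ∫ ω, supAvg f (signWeights σ) ω ∂P) / 2 ^ n := by
    simp only [radS_range, integral_div]
    rw [integral_finsetSum _ fun σ _ => integrable_supAvg hf hM _]
  have summed := Finset.sum_le_sum fun σ (_ : σ ∈ Finset.univ) => le_of_signs σ
  rw [Finset.sum_add_distrib, sum_comp_not fun σ => ∫ ω, supAvg f (signWeights σ) ω ∂P,
    ← two_mul] at summed
  rw [integral_radS, ← mul_div_assoc, le_div_iff₀ (by positivity), mul_comm]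
  simpa using summed

end Symmetrization

section UniformDeviation

variable {X κ : Type*} [MeasurableSpace X] {n : ℕ} {f : κ → X → ℝ} {M : ℝ} (D : Measure X)
  [IsProbabilityMeasure D]

lemma hasBoundedDifferences_supAvg_sub_radS [Nonempty κ] {c : ℝ} (hM : ∀ k x, |f k x| ≤ M)
    (hc : ∀ k x y, |f k x - f k y| ≤ c) :
    HasBoundedDifferences
      (fun ω : Fin n → X => supAvg (meanDeviation D f) 1 ω - 2 * radS ω (range f))
      (fun _ => 3 * c / n) := by
  have meanDeviation_diff (k : κ) (x y : X) :
      |meanDeviation D f k x - meanDeviation D f k y| ≤ c := by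
    simpa only [meanDeviation, sub_sub_sub_cancel_left] using hc k y x
  convert (hasBoundedDifferences_supAvg (abs_meanDeviation_le D hM) meanDeviation_diff 1).sub
    ((hasBoundedDifferences_radS hM hc).const_mul 2) using 2
  simp only [Pi.one_apply, abs_one, abs_two]
  ring

lemma measureReal_supAvg_sub_radS_ge_le [Countable κ] [Nonempty κ] {c ε : ℝ}
    (hf : ∀ k, Measurable (f k)) (hM : ∀ k x, |f k x| ≤ M) (hc : ∀ k x y, |f k x - f k y| ≤ c)
    (hε : 0 ≤ ε) :
    (Measure.pi fun _ : Fin n => D).real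
        {ω | ε ≤ supAvg (meanDeviation D f) 1 ω - 2 * radS ω (range f)} ≤
      Real.exp (-(2 * n * ε ^ 2 / (3 * c) ^ 2)) := by
  set P := Measure.pi fun _ : Fin n => D
  set G : (Fin n → X) → ℝ := fun ω => supAvg (meanDeviation D f) 1 ω - 2 * radS ω (range f)
  have hGm : Measurable G := (measurable_supAvg (measurable_meanDeviation D hf) 1).sub
    ((measurable_radS hf).const_mul 2)
  have integral_G_nonpos : ∫ ω, G ω ∂P ≤ 0 := by
    rw [integral_sub (integrable_supAvg (measurable_meanDeviation D hf)
      (abs_meanDeviation_le D hM) 1) ((integrable_radS hf hM).const_mul 2), integral_const_mul]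
    exact sub_nonpos.2 (integral_supAvg_meanDeviation_le_radS D hf hM)
  have sum_sq : 2 * ε ^ 2 / ∑ _i : Fin n, (3 * c / n) ^ 2 = 2 * n * ε ^ 2 / (3 * c) ^ 2 := by
    rcases eq_or_ne n 0 with rfl | hn
    · simp
    · simp only [Finset.sum_const, Finset.card_univ, Fintype.card_fin, nsmul_eq_mul]
      field_simp
  calc P.real {ω | ε ≤ G ω} ≤ P.real {ω | ε ≤ G ω - ∫ ω', G ω' ∂P} :=
        measureReal_mono fun ω (hω : ε ≤ G ω) => by
          simp only [mem_ofPred_eq]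
          linarith
    _ ≤ _ := (hasBoundedDifferences_supAvg_sub_radS D hM hc).measureReal_sub_integral_ge_le _ hGm hε
    _ = _ := by rw [sum_sq]

end UniformDeviation

section IntegralProbMetric

variable {X : Type*} [MeasurableSpace X] {n : ℕ}

/-- The integral probability metric with generator `F`. For a class of `{0,1}`-valued functions it
is the divergence `dH`. -/
noncomputable def integralProbMetric (F : Set (X → ℝ)) (P Q : Measure X) : ℝ :=
  sSup ((fun f => |∫ x, f x ∂P - ∫ x, f x ∂Q|) '' F)

lemma dH_eq_integralProbMetric {H : Set (X → ℝ)} (hH : ∀ h ∈ H, Measurable h)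
    (h01 : ∀ h ∈ H, ∀ x, h x = 0 ∨ h x = 1) (P Q : Measure X) :
    dH H P Q = integralProbMetric H P Q := by
  refine congrArg sSup (image_congr fun h hh => ?_)
  have eq_indicator : h = {x | h x = 1}.indicator 1 := by
    ext x
    rcases h01 h hh x with hx | hx <;> simp [indicator, hx]
  have integral_eq (μ : Measure X) : ∫ x, h x ∂μ = (μ {x | h x = 1}).toReal := by
    conv_lhs => rw [eq_indicator]
    exact integral_indicator_one (hH h hh (measurableSet_singleton 1))
  simp only [integral_eq]

lemma integral_empD {g : X → ℝ} (hg : Measurable g) (ω : Fin n → X) :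
    ∫ x, g x ∂(empD ω) = (1 / (n : ℝ)) * ∑ i, g (ω i) := by
  rw [empD, integral_smul_measure, integral_finsetSum_measure fun i _ =>
    integrable_dirac' hg.stronglyMeasurable (by simp)]
  simp [integral_dirac' _ _ hg.stronglyMeasurable]

variable {κ : Type*} {f : κ → X → ℝ} {M : ℝ} (D : Measure X)

lemma integral_sub_integral_empD_eq {k : κ} (hf : Measurable (f k)) (hn : n ≠ 0)
    (ω : Fin n → X) :
    ∫ x, f k x ∂D - ∫ x, f k x ∂(empD ω) =
      (1 / (n : ℝ)) * ∑ i, (1 : Fin n → ℝ) i * meanDeviation D f k (ω i) := by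
  rw [integral_empD hf]
  simp only [Pi.one_apply, one_mul, meanDeviation, Finset.sum_sub_distrib, Finset.sum_const,
    Finset.card_univ, Fintype.card_fin, nsmul_eq_mul]
  field_simp

variable [IsProbabilityMeasure D]

lemma integralProbMetric_empD_le [Nonempty κ] (hf : ∀ k, Measurable (f k))
    (hM : ∀ k x, |f k x| ≤ M) (hn : n ≠ 0) (ω : Fin n → X) :
    integralProbMetric (range f) D (empD ω) ≤
      max (supAvg (meanDeviation D f) 1 ω) (supAvg (meanDeviation D (-f)) 1 ω) := by
  have le_supAvg {g : κ → X → ℝ} (hg : ∀ k, Measurable (g k)) (hgM : ∀ k x, |g k x| ≤ M) (k : κ) :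
      ∫ x, g k x ∂D - ∫ x, g k x ∂(empD ω) ≤ supAvg (meanDeviation D g) 1 ω :=
    (integral_sub_integral_empD_eq D (hg k) hn ω).trans_le
      (weighted_avg_le_supAvg (abs_meanDeviation_le D hgM) 1 ω k)
  have neg_le_supAvg := le_supAvg (g := -f) (fun k => (hf k).neg) (by simpa using hM)
  refine csSup_le ((range_nonempty f).image _) ?_
  rintro _ ⟨_, ⟨k, rfl⟩, rfl⟩
  have neg_le := neg_le_supAvg k
  simp only [Pi.neg_apply, integral_neg, ← neg_sub'] at neg_le
  exact max_le_max (le_supAvg hf hM k) neg_le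

theorem measureReal_integralProbMetric_empD_gt_le [Countable κ] [Nonempty κ] {c ε : ℝ}
    (hf : ∀ k, Measurable (f k)) (hM : ∀ k x, |f k x| ≤ M) (hc : ∀ k x y, |f k x - f k y| ≤ c)
    (hn : n ≠ 0) (hε : 0 ≤ ε) :
    (Measure.pi fun _ : Fin n => D).real
        {ω | 2 * radS ω (range f) + ε < integralProbMetric (range f) D (empD ω)} ≤
      2 * Real.exp (-(2 * n * ε ^ 2 / (3 * c) ^ 2)) := by
  set P := Measure.pi fun _ : Fin n => D
  have upper_tail := measureReal_supAvg_sub_radS_ge_le (n := n) D hf hM hc hε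
  have lower_tail := measureReal_supAvg_sub_radS_ge_le (n := n) (f := -f) D
    (fun k => (hf k).neg) (by simpa using hM)
    (fun k x y => by simpa [neg_add_eq_sub] using hc k y x) hε
  simp only [radS_range_neg] at lower_tail
  rw [two_mul]
  refine (measureReal_mono fun ω hω => ?_).trans
    ((measureReal_union_le _ _).trans (add_le_add upper_tail lower_tail))
  rcases lt_max_iff.1 (hω.trans_le (integralProbMetric_empD_le D hf hM hn ω)) with h | h
  · exact .inl (le_sub_iff_add_le'.2 h.le)
  · exact .inr (le_sub_iff_add_le'.2 h.le)

end IntegralProbMetric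

theorem stmt_17_general {X : Type*} [MeasurableSpace X] (D : Measure X) [IsProbabilityMeasure D]
    {F : Set (X → ℝ)} (hFcount : F.Countable) (hFne : F.Nonempty)
    (hmeas : ∀ f ∈ F, Measurable f) {a b : ℝ} (hab : a < b)
    (hrange : ∀ f ∈ F, ∀ x, f x ∈ Icc a b) {n : ℕ} (hn : 1 ≤ n) {δ : ℝ}
    (hδ : δ ∈ Ioo (0 : ℝ) 1) :
    ENNReal.ofReal (1 - δ) ≤
      (Measure.pi fun _ : Fin n => D)
        {ω | integralProbMetric F D (empD ω) ≤
          2 * radS ω F + 3 * (b - a) * Real.sqrt (Real.log (2 / δ) / (2 * n))} := by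
  obtain ⟨f, rfl⟩ := hFcount.exists_eq_range hFne
  simp only [forall_mem_range] at hmeas hrange
  set P := Measure.pi fun _ : Fin n => D
  set ε := 3 * (b - a) * Real.sqrt (Real.log (2 / δ) / (2 * n)) with hε
  set A := {ω : Fin n → X | 2 * radS ω (range f) + ε < integralProbMetric (range f) D (empD ω)}
  have hba : 0 < b - a := sub_pos.2 hab
  have hlog : 0 ≤ Real.log (2 / δ) :=
    Real.log_nonneg (by rw [le_div_iff₀ hδ.1]; linarith [hδ.2])
  have exponent_eq : 2 * n * ε ^ 2 / (3 * (b - a)) ^ 2 = Real.log (2 / δ) := by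
    have : (n : ℝ) ≠ 0 := by positivity
    rw [hε, mul_pow, Real.sq_sqrt (by positivity)]
    field_simp
  have tail : P.real A ≤ δ := by
    have := measureReal_integralProbMetric_empD_gt_le D (n := n) (c := b - a) (ε := ε) hmeas
      (fun k x => abs_le_max_abs_abs (hrange k x).1 (hrange k x).2)
      (fun k x y => abs_sub_le_of_le_of_le (hrange k x).1 (hrange k x).2 (hrange k y).1
        (hrange k y).2) (by lia) (by positivity)
    rwa [exponent_eq, Real.exp_neg, Real.exp_log (div_pos two_pos hδ.1), inv_div,
      mul_div_cancel₀ _ two_ne_zero] at this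
  have cover : 1 ≤ P.real A + P.real Aᶜ := by
    simpa using measureReal_union_le (μ := P) A Aᶜ
  calc ENNReal.ofReal (1 - δ) ≤ ENNReal.ofReal (P.real Aᶜ) :=
        ENNReal.ofReal_le_ofReal (by linarith)
    _ = P Aᶜ := ofReal_measureReal
    _ ≤ _ := measure_mono fun ω hω => by simpa [A] using hω

theorem stmt_17 {X : Type*} [MeasurableSpace X]
    (D : Measure X) [IsProbabilityMeasure D]
    (Ht : Set (X → ℝ)) (hHcount : Ht.Countable) (hHne : Ht.Nonempty)
    (hmeas : ∀ h ∈ Ht, Measurable h)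
    (hrange : ∀ h ∈ Ht, ∀ x, h x = 0 ∨ h x = 1)
    (n : ℕ) (hn : 1 ≤ n) (δ : ℝ) (hδ : δ ∈ Ioo (0 : ℝ) 1) :
    ENNReal.ofReal (1 - δ) ≤
      (Measure.pi fun _ : Fin n => D)
        {ω | dH Ht D (empD ω) ≤
          2 * radS ω Ht + 3 * Real.sqrt (Real.log (2 / δ) / (2 * n))} := by
  simp only [dH_eq_integralProbMetric hmeas hrange]
  have hmem : ∀ h ∈ Ht, ∀ x, h x ∈ Icc (0 : ℝ) 1 := fun h hh x => by
    rcases hrange h hh x with hx | hx <;> simp [hx]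
  simpa using stmt_17_general D hHcount hHne hmeas one_pos hmem hn hδ
end
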